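/- Truncation preserves viscosity subsolutions: Let Ω be a domain in ℝ^N with N ≥ 2, let H : Ω → ℝ be locally Lipschitz continuous, let v be an upper semicontinuous viscosity subsolution of M(v) = NH in Ω, let x₀ ∈ Ω and R > 0 with cl(B(x₀,R)) ⊂ Ω and H ≤ 1/R on cl(B(x₀,R)), and let K ∈ ℝ. Then the function v_R(x) := max{ v(x), −K − √(R² − |x−x₀|²) } is upper semicontinuous on cl(B(x₀,R)) and is a viscosity subsolution of M(v_R) = NH in B(x₀,R). -/

import Mathlib

open Metric Set Filter Topology MeasureTheory

/-- The mean curvature operator `M(w) = div (Dw / sqrt (1 + |Dw|²))`,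
computed as the sum of the partial derivatives of the components of the
normalized gradient field. -/
noncomputable def mcOp {N : ℕ} (w : EuclideanSpace ℝ (Fin N) → ℝ)
    (x : EuclideanSpace ℝ (Fin N)) : ℝ :=
  ∑ i : Fin N,
    fderiv ℝ (fun y => (Real.sqrt (1 + ‖gradient w y‖ ^ 2))⁻¹ * gradient w y i) x
      (EuclideanSpace.single i 1)

/-- `f` is locally Lipschitz continuous on the set `s`. -/
def LocLipschitzOn {N : ℕ} (s : Set (EuclideanSpace ℝ (Fin N)))
    (f : EuclideanSpace ℝ (Fin N) → ℝ) : Prop :=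
  ∀ x ∈ s, ∃ K : NNReal, ∃ t ∈ 𝓝[s] x, LipschitzOnWith K f t

/-- `u` is a viscosity supersolution of `M(u) = N H` on the open set `U`. -/
def IsViscositySupersol {N : ℕ} (U : Set (EuclideanSpace ℝ (Fin N)))
    (H u : EuclideanSpace ℝ (Fin N) → ℝ) : Prop :=
  ∀ φ : EuclideanSpace ℝ (Fin N) → ℝ, ContDiffOn ℝ 2 φ U →
    ∀ x ∈ U, IsLocalMinOn (fun y => u y - φ y) U x → mcOp φ x ≤ N * H x

/-- `v` is a viscosity subsolution of `M(v) = N H` on the open set `U`. -/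
def IsViscositySubsol {N : ℕ} (U : Set (EuclideanSpace ℝ (Fin N)))
    (H v : EuclideanSpace ℝ (Fin N) → ℝ) : Prop :=
  ∀ φ : EuclideanSpace ℝ (Fin N) → ℝ, ContDiffOn ℝ 2 φ U →
    ∀ x ∈ U, IsLocalMaxOn (fun y => v y - φ y) U x → mcOp φ x ≥ N * H x

section helpers
variable {N : ℕ}

local notation "E" => EuclideanSpace ℝ (Fin N)

lemma mcOp_congr {f g : E → ℝ} {x : E} (h : f =ᶠ[𝓝 x] g) : mcOp f x = mcOp g x := by
  unfold mcOp
  have hg : ∀ᶠ y in 𝓝 x, gradient f y = gradient g y := by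
    filter_upwards [h.eventuallyEq_nhds] with y hy
    simp only [gradient, hy.fderiv_eq]
  refine Finset.sum_congr rfl fun i _ => ?_
  have : (fun y => (Real.sqrt (1 + ‖gradient f y‖ ^ 2))⁻¹ * gradient f y i) =ᶠ[𝓝 x]
      (fun y => (Real.sqrt (1 + ‖gradient g y‖ ^ 2))⁻¹ * gradient g y i) := by
    filter_upwards [hg] with y hy
    rw [hy]
  rw [this.fderiv_eq]

lemma mcOp_formula {w : E → ℝ} {x : E} {L : E →L[ℝ] E} (hL : HasFDerivAt (gradient w) L x) :
    mcOp w x = (Real.sqrt (1 + ‖gradient w x‖ ^ 2))⁻¹ ^ 3 *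
      ((1 + ‖gradient w x‖ ^ 2) * (∑ i, L (EuclideanSpace.single i 1) i) -
        ∑ i, ∑ j, gradient w x i * gradient w x j * L (EuclideanSpace.single i 1) j) := by
  set p := gradient w x with hp
  set W := Real.sqrt (1 + ‖p‖ ^ 2) with hW
  have hpos : 0 < 1 + ‖p‖ ^ 2 := by positivity
  have hWpos : 0 < W := Real.sqrt_pos.2 hpos
  have hW2 : W ^ 2 = 1 + ‖p‖ ^ 2 := Real.sq_sqrt hpos.le
  unfold mcOp
  rw [mul_sub, Finset.mul_sum, Finset.mul_sum, Finset.mul_sum, ← Finset.sum_sub_distrib]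
  refine Finset.sum_congr rfl fun i _ => ?_
  have h1 : HasFDerivAt (fun y => gradient w y i)
      ((EuclideanSpace.proj i : E →L[ℝ] ℝ).comp L) x :=
    ((EuclideanSpace.proj i : E →L[ℝ] ℝ).hasFDerivAt).comp x hL
  have h2 := ((hasDerivAt_inv (x := Real.sqrt (1 + ‖gradient w x‖ ^ 2)) hWpos.ne').comp_hasFDerivAt x
    ((hL.norm_sq.const_add 1).sqrt hpos.ne')).mul h1
  have h3 := congrArg (fun T : E →L[ℝ] ℝ => T (EuclideanSpace.single i 1)) h2.fderiv
  refine (Eq.trans ?_ h3).trans ?_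
  · rfl
  · have hin : inner ℝ p (L (EuclideanSpace.single i 1)) =
        ∑ j, p j * L (EuclideanSpace.single i 1) j := by
      simp [PiLp.inner_apply, mul_comm]
    have hs : ∑ j, p i * p j * L (EuclideanSpace.single i 1) j =
        p i * inner ℝ p (L (EuclideanSpace.single i 1)) := by
      rw [hin, Finset.mul_sum]; exact Finset.sum_congr rfl fun j _ => by ring
    rw [hs]
    simp [← hp, ← hW]
    rw [← hW2]
    field_simp
    try ring

lemma psd_ineq {L : E →L[ℝ] E} (hL : ∀ u, 0 ≤ inner ℝ (L u) u) (p : E) :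
    0 ≤ (1 + ‖p‖ ^ 2) * (∑ i, L (EuclideanSpace.single i 1) i) -
        ∑ i, ∑ j, p i * p j * L (EuclideanSpace.single i 1) j := by
  set D : Fin N → Fin N → ℝ := fun i j => L (EuclideanSpace.single i 1) j with hD
  have h1 : ∀ i, 0 ≤ D i i := fun i => by
    have := hL (EuclideanSpace.single i 1)
    simpa [EuclideanSpace.inner_single_right] using this
  have h2 : ∀ i j, 0 ≤ p j ^ 2 * D i i + p i ^ 2 * D j j - p i * p j * D i j - p i * p j * D j i :=
    fun i j => by
    have := hL (p j • EuclideanSpace.single i 1 - p i • EuclideanSpace.single j 1)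
    simp only [map_sub, map_smul, inner_sub_left, inner_sub_right, inner_smul_left,
      inner_smul_right, EuclideanSpace.inner_single_right] at this
    simp at this
    simp only [hD]
    linarith
  have h3 : 0 ≤ ∑ i, ∑ j, (p j ^ 2 * D i i + p i ^ 2 * D j j - p i * p j * D i j - p i * p j * D j i) :=
    Finset.sum_nonneg fun i _ => Finset.sum_nonneg fun j _ => h2 i j
  have hn : ‖p‖ ^ 2 = ∑ i, p i ^ 2 := by
    rw [EuclideanSpace.norm_sq_eq]; simp
  have ha : ∑ i, ∑ j, p j ^ 2 * D i i = ‖p‖ ^ 2 * ∑ i, D i i := by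
    simp_rw [← Finset.sum_mul, ← Finset.mul_sum]; rw [hn]
  have hb : ∑ i, ∑ j, p i ^ 2 * D j j = ‖p‖ ^ 2 * ∑ i, D i i := by
    rw [Finset.sum_comm, ha]
  have hc : ∑ i, ∑ j, p i * p j * D j i = ∑ i, ∑ j, p i * p j * D i j := by
    rw [Finset.sum_comm]
    exact Finset.sum_congr rfl fun i _ => Finset.sum_congr rfl fun j _ => by ring
  simp only [Finset.sum_sub_distrib, Finset.sum_add_distrib] at h3
  rw [ha, hb, hc] at h3
  have h4 : 0 ≤ ∑ i, D i i := Finset.sum_nonneg fun i _ => h1 i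
  show 0 ≤ (1 + ‖p‖ ^ 2) * (∑ i, D i i) - ∑ i, ∑ j, p i * p j * D i j
  linarith

lemma gradient_diff {f : E → ℝ} {x : E} (hf : ContDiffAt ℝ 2 f x) :
    DifferentiableAt ℝ (gradient f) x := by
  have h : ContDiffAt ℝ 1 (fderiv ℝ f) x := hf.fderiv_right (by norm_num)
  have h' : DifferentiableAt ℝ (fderiv ℝ f) x := h.differentiableAt (by norm_num)
  exact ((InnerProductSpace.toDual ℝ E).symm.toContinuousLinearEquiv.differentiableAt).comp x h'

lemma second_order {d : E → ℝ} {x : E} (hd : ContDiffAt ℝ 2 d x) (hm : IsLocalMax d x)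
    {L : E →L[ℝ] E} (hL : HasFDerivAt (gradient d) L x) (u : E) : inner ℝ (L u) u ≤ 0 := by
  by_contra! hc
  have hline : ∀ t : ℝ, HasDerivAt (fun t : ℝ => x + t • u) u t := fun t => by
    simpa using ((hasDerivAt_id t).smul_const u).const_add x
  have hcont : Tendsto (fun t : ℝ => x + t • u) (𝓝 0) (𝓝 x) := by
    have := (hline 0).continuousAt.tendsto
    simpa using this
  set q : ℝ → ℝ := fun t => d (x + t • u) with hq
  have hev : ∀ᶠ y in 𝓝 x, DifferentiableAt ℝ d y := by
    have := hd.eventually (by simp)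
    filter_upwards [this] with y hy
    exact hy.differentiableAt (by norm_num)
  have hdq : ∀ᶠ t in 𝓝 (0:ℝ), deriv q t = inner ℝ (gradient d (x + t • u)) u := by
    filter_upwards [hcont.eventually hev] with t ht
    have := (ht.hasFDerivAt.comp_hasDerivAt t (hline t)).deriv
    refine Eq.trans ?_ (this.trans ?_)
    · rfl
    · simp [gradient]
  have hL0 : HasFDerivAt (gradient d) L (x + (0:ℝ) • u) := by simpa using hL
  have hg : HasDerivAt (fun t : ℝ => inner ℝ (gradient d (x + t • u)) u) (inner ℝ (L u) u) 0 := by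
    have h1 := hL0.comp_hasDerivAt (0:ℝ) (hline 0)
    have := h1.inner ℝ (hasDerivAt_const (0:ℝ) u)
    simpa using this
  have hdd : deriv (deriv q) 0 = inner ℝ (L u) u := by
    rw [Filter.EventuallyEq.deriv_eq hdq]; exact hg.deriv
  have hqmax : IsLocalMax q 0 := by
    have := hcont.eventually hm
    filter_upwards [this] with t ht
    simpa [hq] using ht
  have hqc : ContinuousAt q 0 := by
    have : ContinuousAt d (x + (0:ℝ) • u) := by simpa using hd.continuousAt
    exact this.comp_of_eq (hline 0).continuousAt rfl
  have hqmin : IsLocalMin q 0 :=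
    isLocalMin_of_deriv_deriv_pos (by rw [hdd]; exact hc) hqmax.deriv_eq_zero hqc
  have hqe : q =ᶠ[𝓝 0] fun _ => q 0 := by
    filter_upwards [hqmax, hqmin] with t h1 h2
    exact le_antisymm h1 h2
  have : deriv (deriv q) 0 = 0 := by
    rw [hqe.deriv.deriv_eq]; simp
  rw [hdd] at this
  exact hc.ne' this

lemma mcOp_le_of_max {f g : E → ℝ} {x : E} (hf : ContDiffAt ℝ 2 f x) (hg : ContDiffAt ℝ 2 g x)
    (hm : IsLocalMax (fun y => f y - g y) x) : mcOp f x ≤ mcOp g x := by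
  have hLf := (gradient_diff hf).hasFDerivAt
  have hLg := (gradient_diff hg).hasFDerivAt
  set Lf := fderiv ℝ (gradient f) x
  set Lg := fderiv ℝ (gradient g) x
  have hev : gradient (fun y => f y - g y) =ᶠ[𝓝 x] fun y => gradient f y - gradient g y := by
    filter_upwards [hf.eventually (by simp), hg.eventually (by simp)] with y h1 h2
    have h1 := h1.differentiableAt (by norm_num)
    have h2 := h2.differentiableAt (by norm_num)
    simp only [gradient]
    rw [fderiv_fun_sub h1 h2, map_sub]
  have hL : HasFDerivAt (gradient (fun y => f y - g y)) (Lf - Lg) x :=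
    (hLf.sub hLg).congr_of_eventuallyEq hev
  have hgr : gradient f x = gradient g x := by
    have h0 : gradient (fun y => f y - g y) x = 0 := by
      simp [gradient, hm.fderiv_eq_zero]
    have := hev.self_of_nhds
    rw [h0] at this
    exact (sub_eq_zero.1 this.symm)
  have hsec := second_order (hf.sub hg) hm hL
  have hpsd := psd_ineq (L := Lg - Lf) (fun u => by
    have := hsec u
    simp only [ContinuousLinearMap.sub_apply, inner_sub_left] at this ⊢
    linarith) (gradient g x)
  rw [mcOp_formula hLf, mcOp_formula hLg, hgr]
  refine mul_le_mul_of_nonneg_left ?_ (by positivity)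
  simp only [ContinuousLinearMap.sub_apply, PiLp.sub_apply, mul_sub, Finset.sum_sub_distrib] at hpsd
  linarith

lemma hemi_hasGradient (x₀ : E) (R K : ℝ) {y : E} (hy : 0 < R ^ 2 - ‖y - x₀‖ ^ 2) :
    gradient (fun x : E => -K - Real.sqrt (R ^ 2 - ‖x - x₀‖ ^ 2)) y =
      (Real.sqrt (R ^ 2 - ‖y - x₀‖ ^ 2))⁻¹ • (y - x₀) := by
  have h1 : HasFDerivAt (fun x : E => x - x₀) (ContinuousLinearMap.id ℝ E) y :=
    (hasFDerivAt_id y).sub_const x₀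
  have h2 := ((h1.norm_sq.const_sub (R ^ 2)).sqrt hy.ne').const_sub (-K)
  have h3 : gradient (fun x : E => -K - Real.sqrt (R ^ 2 - ‖x - x₀‖ ^ 2)) y = _ :=
    congrArg (InnerProductSpace.toDual ℝ E).symm h2.fderiv
  rw [h3, LinearIsometryEquiv.symm_apply_eq]
  have := Real.sqrt_pos.2 hy
  ext u
  simp [inner_smul_left]
  field_simp

lemma hemi_pos {x₀ : E} {R : ℝ} {y : E} (hy : y ∈ ball x₀ R) : 0 < R ^ 2 - ‖y - x₀‖ ^ 2 := by
  rw [mem_ball, dist_eq_norm] at hy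
  have := norm_nonneg (y - x₀)
  nlinarith

lemma hemi_mcOp (x₀ : E) {R : ℝ} (hR : 0 < R) (K : ℝ) {x : E} (hx : x ∈ ball x₀ R) :
    mcOp (fun x : E => -K - Real.sqrt (R ^ 2 - ‖x - x₀‖ ^ 2)) x = N * (1 / R) := by
  unfold mcOp
  have key : ∀ i : Fin N, fderiv ℝ (fun y => (Real.sqrt (1 + ‖gradient
      (fun x : E => -K - Real.sqrt (R ^ 2 - ‖x - x₀‖ ^ 2)) y‖ ^ 2))⁻¹ * gradient
      (fun x : E => -K - Real.sqrt (R ^ 2 - ‖x - x₀‖ ^ 2)) y i) x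
      (EuclideanSpace.single i 1) = 1 / R := by
    intro i
    have he : (fun y => (Real.sqrt (1 + ‖gradient
      (fun x : E => -K - Real.sqrt (R ^ 2 - ‖x - x₀‖ ^ 2)) y‖ ^ 2))⁻¹ * gradient
      (fun x : E => -K - Real.sqrt (R ^ 2 - ‖x - x₀‖ ^ 2)) y i) =ᶠ[𝓝 x]
        fun y => R⁻¹ * (EuclideanSpace.proj i : E →L[ℝ] ℝ) (y - x₀) := by
      filter_upwards [isOpen_ball.mem_nhds hx] with y hy
      have hp := hemi_pos hy
      rw [hemi_hasGradient x₀ R K hp]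
      set s := Real.sqrt (R ^ 2 - ‖y - x₀‖ ^ 2) with hs
      have hs0 : 0 < s := Real.sqrt_pos.2 hp
      have hs2 : s ^ 2 = R ^ 2 - ‖y - x₀‖ ^ 2 := Real.sq_sqrt hp.le
      have : 1 + ‖s⁻¹ • (y - x₀)‖ ^ 2 = (R / s) ^ 2 := by
        rw [norm_smul, mul_pow, Real.norm_eq_abs, sq_abs]
        field_simp
        linarith
      rw [this, Real.sqrt_sq (by positivity)]
      simp
      field_simp
    rw [he.fderiv_eq]
    have h1 : HasFDerivAt (fun x : E => x - x₀) (ContinuousLinearMap.id ℝ E) x :=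
      (hasFDerivAt_id x).sub_const x₀
    have h2 := (((EuclideanSpace.proj i : E →L[ℝ] ℝ).hasFDerivAt).comp x h1).const_mul R⁻¹
    have h3 := congrArg (fun T : E →L[ℝ] ℝ => T (EuclideanSpace.single i 1)) h2.fderiv
    refine (Eq.trans ?_ h3).trans ?_
    · rfl
    · simp
  rw [Finset.sum_congr rfl fun i _ => key i]
  simp

lemma hemi_contDiffAt (x₀ : E) {R : ℝ} (K : ℝ) {x : E} (hx : x ∈ ball x₀ R) :
    ContDiffAt ℝ 2 (fun x : E => -K - Real.sqrt (R ^ 2 - ‖x - x₀‖ ^ 2)) x := by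
  have h : ContDiffAt ℝ 2 (fun x : E => R ^ 2 - ‖x - x₀‖ ^ 2) x :=
    contDiffAt_const.sub ((contDiffAt_id.sub contDiffAt_const).norm_sq ℝ)
  exact contDiffAt_const.sub (h.sqrt (hemi_pos hx).ne')

lemma extend_test {U : Set E} (hU : IsOpen U) {φ : E → ℝ} (hφ : ContDiffOn ℝ 2 φ U) {x : E}
    (hx : x ∈ U) : ∃ ψ : E → ℝ, ContDiff ℝ 2 ψ ∧ ψ =ᶠ[𝓝 x] φ := by
  obtain ⟨r, hr, hrU⟩ := Metric.isOpen_iff.1 hU x hx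
  let b : ContDiffBump x := ⟨r / 4, r / 2, by positivity, by linarith⟩
  refine ⟨fun y => b y * φ y, ?_, ?_⟩
  · rw [contDiff_iff_contDiffAt]
    intro y
    by_cases hy : y ∈ U
    · exact b.contDiff.contDiffAt.mul (hφ.contDiffAt (hU.mem_nhds hy))
    · have hy' : y ∉ tsupport b := by
        rw [b.tsupport_eq]
        intro h
        refine hy (hrU ?_)
        rw [mem_closedBall] at h
        have : dist y x ≤ r / 2 := h
        rw [mem_ball]; linarith
      have h0 : (fun y => b y * φ y) =ᶠ[𝓝 y] fun _ => 0 := by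
        filter_upwards [notMem_tsupport_iff_eventuallyEq.1 hy'] with z hz
        simp [hz]
      exact contDiffAt_const.congr_of_eventuallyEq h0
  · filter_upwards [b.eventuallyEq_one] with y hy
    simp [hy]

end helpers

/-- **Truncation preserves viscosity subsolutions**: truncating a viscosity
subsolution from below by the lower hemisphere `−K − √(R² − |x−x₀|²)` yields an
upper semicontinuous viscosity subsolution on the ball, provided `H ≤ 1/R`. -/
theorem truncation_subsolution {N : ℕ} (hN : 2 ≤ N)
    (Ω : Set (EuclideanSpace ℝ (Fin N))) (hΩo : IsOpen Ω) (hΩc : IsConnected Ω)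
    (H : EuclideanSpace ℝ (Fin N) → ℝ) (hH : LocLipschitzOn Ω H)
    (v : EuclideanSpace ℝ (Fin N) → ℝ)
    (hv_usc : UpperSemicontinuousOn v Ω) (hv : IsViscositySubsol Ω H v)
    (x₀ : EuclideanSpace ℝ (Fin N)) (hx₀ : x₀ ∈ Ω)
    (R : ℝ) (hR : 0 < R) (hball : closedBall x₀ R ⊆ Ω)
    (hHR : ∀ x ∈ closedBall x₀ R, H x ≤ 1 / R) (K : ℝ) :
    UpperSemicontinuousOn
      (fun x => max (v x) (-K - Real.sqrt (R ^ 2 - ‖x - x₀‖ ^ 2))) (closedBall x₀ R) ∧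
    IsViscositySubsol (ball x₀ R) H
      (fun x => max (v x) (-K - Real.sqrt (R ^ 2 - ‖x - x₀‖ ^ 2))) := by
  refine ⟨?_, ?_⟩
  · have hc : UpperSemicontinuousOn
        (fun x => -K - Real.sqrt (R ^ 2 - ‖x - x₀‖ ^ 2)) (closedBall x₀ R) :=
      (Continuous.upperSemicontinuous (by fun_prop)).upperSemicontinuousOn _
    exact (hv_usc.mono hball).sup hc
  · intro φ hφ x hx hmax
    have hmax' : IsLocalMax (fun y => max (v y) (-K - Real.sqrt (R ^ 2 - ‖y - x₀‖ ^ 2)) - φ y) x :=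
      hmax.isLocalMax (isOpen_ball.mem_nhds hx)
    rcases le_total (-K - Real.sqrt (R ^ 2 - ‖x - x₀‖ ^ 2)) (v x) with h | h
    · obtain ⟨ψ, hψ, hψe⟩ := extend_test isOpen_ball hφ hx
      rw [← mcOp_congr hψe]
      refine hv ψ hψ.contDiffOn x (hball (ball_subset_closedBall hx)) ?_
      refine IsLocalMax.on ?_ _
      filter_upwards [hmax', hψe] with y h1 h2
      have h3 := hψe.self_of_nhds
      simp only [max_eq_left h] at h1
      have := le_max_left (v y) (-K - Real.sqrt (R ^ 2 - ‖y - x₀‖ ^ 2))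
      rw [h2, h3]
      linarith
    · have hφx : ContDiffAt ℝ 2 φ x := hφ.contDiffAt (isOpen_ball.mem_nhds hx)
      have hle := mcOp_le_of_max (hemi_contDiffAt x₀ K hx) hφx (by
        filter_upwards [hmax'] with y h1
        simp only [max_eq_right h] at h1
        have := le_max_right (v y) (-K - Real.sqrt (R ^ 2 - ‖y - x₀‖ ^ 2))
        linarith)
      rw [hemi_mcOp x₀ hR K hx] at hle
      have := mul_le_mul_of_nonneg_left (hHR x (ball_subset_closedBall hx)) (Nat.cast_nonneg (α := ℝ) N)
      exact this.trans hle
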